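/- arXiv:0709.3821 — 11 statements merged into one kernel-verified Lean document; each statement's English description precedes it below -/
import Mathlib

section
/- Let m be an odd positive integer and let l be an even integer with 0 ≤ l ≤ m−1. Then for every natural number x, S_{m,l}(2x) = S_{m,l/2}(x) − S_{m,(l+m−1)/2}(x). -/
/-- The Newman sum `S_{m,l}(x) = ∑_{0 ≤ n < x, n ≡ l (mod m)} (-1)^{σ(n)}`,
where `σ(n)` is the sum of the binary digits of `n`. -/
def newmanSum (m l x : ℕ) : ℤ :=
  ∑ n ∈ Finset.range x, if n % m = l then (-1 : ℤ) ^ ((Nat.digits 2 n).sum) else 0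

theorem aux_mod (m r q t : ℕ) (hm : r < m) (h : t < 2) :
    (2 * (m * q + r) + t) % m = if 2 * r + t < m then 2 * r + t else 2 * r + t - m := by
  have e : 2 * (m * q + r) + t = (2 * r + t) + m * (2 * q) := by ring
  rw [e, Nat.add_mul_mod_self_left]
  split_ifs with h1
  · exact Nat.mod_eq_of_lt h1
  · rw [Nat.mod_eq_sub_mod (by omega)]
    exact Nat.mod_eq_of_lt (by omega)

theorem stmt_0 (m l : ℕ) (hm : 0 < m) (hmodd : Odd m) (hleven : Even l)
    (hl : l ≤ m - 1) (x : ℕ) :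
    newmanSum m l (2 * x) =
      newmanSum m (l / 2) x - newmanSum m ((l + m - 1) / 2) x := by
  have hd0 : ∀ n : ℕ, (Nat.digits 2 (2 * n)).sum = (Nat.digits 2 n).sum := by
    intro n
    rcases Nat.eq_zero_or_pos n with rfl | h
    · simp
    · rw [Nat.digits_def' (by norm_num) (by omega)]
      simp
  have hd1 : ∀ n : ℕ, (Nat.digits 2 (2 * n + 1)).sum = (Nat.digits 2 n).sum + 1 := by
    intro n
    rw [Nat.digits_def' (by norm_num) (by omega), List.sum_cons,
      show (2 * n + 1) % 2 = 1 by omega, show (2 * n + 1) / 2 = n by omega, add_comm]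
  have h0 : ∀ n : ℕ, (2 * n) % m = l ↔ n % m = l / 2 := by
    intro n
    have a := aux_mod m (n % m) (n / m) 0 (Nat.mod_lt _ hm) (by norm_num)
    rw [Nat.div_add_mod, add_zero] at a
    have b := Nat.mod_lt n hm
    obtain ⟨u, rfl⟩ := hmodd
    obtain ⟨v, rfl⟩ := hleven
    rw [a]
    split_ifs <;> omega
  have h1 : ∀ n : ℕ, (2 * n + 1) % m = l ↔ n % m = (l + m - 1) / 2 := by
    intro n
    have a := aux_mod m (n % m) (n / m) 1 (Nat.mod_lt _ hm) (by norm_num)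
    rw [Nat.div_add_mod] at a
    have b := Nat.mod_lt n hm
    obtain ⟨u, rfl⟩ := hmodd
    obtain ⟨v, rfl⟩ := hleven
    rw [a]
    split_ifs <;> omega
  unfold newmanSum
  induction x with
  | zero => simp
  | succ x ih =>
    rw [show 2 * (x + 1) = 2 * x + 1 + 1 by ring, Finset.sum_range_succ, Finset.sum_range_succ, ih,
      Finset.sum_range_succ, Finset.sum_range_succ]
    simp only [h0, h1, hd0, hd1, pow_succ]
    split_ifs <;> ring
end

section
/- Let m be an odd positive integer and let l be an odd integer with 0 ≤ l ≤ m−1. Then for every natural number x, S_{m,l}(2x) = −S_{m,(l−1)/2}(x) + S_{m,(l+m)/2}(x). -/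
theorem newman_aux_mod (m n : ℕ) (c : ℕ) : (2 * n + c) % m = (2 * (n % m) + c) % m := by
  conv_lhs => rw [← Nat.mod_add_div n m]
  rw [show 2 * (n % m + m * (n / m)) + c = 2 * (n % m) + c + m * (2 * (n / m)) by ring,
    Nat.add_mul_mod_self_left]

theorem newman_aux_small (m a : ℕ) (h : a < 2 * m) : a % m = if a < m then a else a - m := by
  split_ifs with h1
  · exact Nat.mod_eq_of_lt h1
  · rw [Nat.mod_eq_sub_mod (by omega), Nat.mod_eq_of_lt (by omega)]

theorem stmt_1 (m l : ℕ) (hm : 0 < m) (hmodd : Odd m) (hlodd : Odd l)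
    (hl : l ≤ m - 1) (x : ℕ) :
    newmanSum m l (2 * x) =
      -newmanSum m ((l - 1) / 2) x + newmanSum m ((l + m) / 2) x := by
  obtain ⟨k, rfl⟩ := hmodd
  obtain ⟨j, rfl⟩ := hlodd
  have e1 : (2 * j + 1 - 1) / 2 = j := by omega
  have e2 : (2 * j + 1 + (2 * k + 1)) / 2 = j + k + 1 := by omega
  rw [e1, e2]
  unfold newmanSum
  induction x with
  | zero => simp
  | succ n ih =>
    rw [show 2 * (n + 1) = 2 * n + 1 + 1 by ring, Finset.sum_range_succ, Finset.sum_range_succ, ih,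
      Finset.sum_range_succ, Finset.sum_range_succ]
    have d0 : (Nat.digits 2 (2 * n)).sum = (Nat.digits 2 n).sum := by
      rcases Nat.eq_zero_or_pos n with rfl | hn
      · simp
      · rw [Nat.digits_def' (by norm_num) (by omega)]
        simp
    have d1 : (Nat.digits 2 (2 * n + 1)).sum = (Nat.digits 2 n).sum + 1 := by
      rw [Nat.digits_def' (by norm_num) (by omega),
        show (2 * n + 1) % 2 = 1 by omega, show (2 * n + 1) / 2 = n by omega, List.sum_cons, add_comm]
    have hr := Nat.mod_lt n hm
    have c0 : (2 * n) % (2 * k + 1) = 2 * j + 1 ↔ n % (2 * k + 1) = j + k + 1 := by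
      have := newman_aux_mod (2 * k + 1) n 0
      simp only [add_zero] at this
      rw [this, newman_aux_small _ _ (by omega)]
      split_ifs <;> omega
    have c1 : (2 * n + 1) % (2 * k + 1) = 2 * j + 1 ↔ n % (2 * k + 1) = j := by
      rw [newman_aux_mod, newman_aux_small _ _ (by omega)]
      split_ifs <;> omega
    simp only [c0, c1, d0, d1, pow_succ]
    split_ifs <;> ring
end

section
/- Let m be an even positive integer and let l be an odd integer with 0 ≤ l ≤ m−1. Then for every natural number x, S_{m,l}(2x) = −S_{m/2, (l−1)/2}(x). -/
theorem stmt_3 (m l : ℕ) (hm : 0 < m) (hmeven : Even m) (hlodd : Odd l)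
    (hl : l ≤ m - 1) (x : ℕ) :
    newmanSum m l (2 * x) = -newmanSum (m / 2) ((l - 1) / 2) x := by
  obtain ⟨k, rfl⟩ := hmeven
  obtain ⟨j, rfl⟩ := hlodd
  have hk : 0 < k := by omega
  have e1 : (k + k) / 2 = k := by omega
  have e2 : (2 * j + 1 - 1) / 2 = j := by omega
  rw [e1, e2, ← two_mul]
  unfold newmanSum
  induction x with
  | zero => simp
  | succ x ih =>
    have h0 : (2 * x) % (2 * k) = 2 * (x % k) := Nat.mul_mod_mul_left 2 x k
    have hlt : x % k < k := Nat.mod_lt x hk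
    have h1 : (2 * x + 1) % (2 * k) = 2 * (x % k) + 1 := by
      rw [Nat.add_mod, h0, Nat.mod_eq_of_lt (show 1 < 2 * k by omega),
        Nat.mod_eq_of_lt (by omega)]
    have hd : (Nat.digits 2 (2 * x + 1)).sum = (Nat.digits 2 x).sum + 1 := by
      rw [Nat.digits_def' (by norm_num) (by omega), List.sum_cons,
        show (2 * x + 1) % 2 = 1 by omega, show (2 * x + 1) / 2 = x by omega, add_comm]
    rw [show 2 * (x + 1) = 2 * x + 1 + 1 by ring, Finset.sum_range_succ, Finset.sum_range_succ,
      Finset.sum_range_succ, ih, h0, h1, hd, if_neg (by omega)]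
    by_cases h : x % k = j
    · rw [if_pos h, if_pos (by omega)]; ring
    · rw [if_neg h, if_neg (by omega)]; ring
end

section
/- For every even natural number n, S_{3,0}(4n) = 3·S_{3,0}(n). -/
def tmS (n : ℕ) : ℤ := (-1 : ℤ) ^ ((Nat.digits 2 n).sum)

lemma tmS_even (n : ℕ) : tmS (2 * n) = tmS n := by
  unfold tmS
  rcases Nat.eq_zero_or_pos n with h | h
  · simp [h]
  · rw [Nat.digits_def' (by norm_num) (by omega)]
    simp

lemma tmS_odd (n : ℕ) : tmS (2 * n + 1) = - tmS n := by
  unfold tmS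
  rw [Nat.digits_def' (by norm_num) (by omega)]
  have h1 : (2 * n + 1) % 2 = 1 := by omega
  have h2 : (2 * n + 1) / 2 = n := by omega
  rw [h1, h2, List.sum_cons, pow_add]
  ring

lemma newmanSum_zero' : newmanSum 3 0 0 = 0 := by simp [newmanSum]

lemma newmanSum_succ' (x : ℕ) :
    newmanSum 3 0 (x + 1) = newmanSum 3 0 x + if x % 3 = 0 then tmS x else 0 := by
  simp only [newmanSum, tmS, Finset.sum_range_succ]

lemma newman_aux (m : ℕ) :
    newmanSum 3 0 (8 * m) = 3 * newmanSum 3 0 (2 * m) := by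
  induction m with
  | zero => simp [newmanSum_zero']
  | succ m ih =>
    have e0 : tmS (8 * m) = tmS m := by
      rw [show 8 * m = 2 * (2 * (2 * m)) by ring]; simp only [tmS_even]
    have e1 : tmS (8 * m + 1) = - tmS m := by
      rw [show 8 * m + 1 = 2 * (2 * (2 * m)) + 1 by ring]; simp only [tmS_even, tmS_odd]
    have e2 : tmS (8 * m + 2) = - tmS m := by
      rw [show 8 * m + 2 = 2 * (2 * (2 * m) + 1) by ring]; simp only [tmS_even, tmS_odd]
    have e3 : tmS (8 * m + 3) = tmS m := by
      rw [show 8 * m + 3 = 2 * (2 * (2 * m) + 1) + 1 by ring]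
      simp only [tmS_even, tmS_odd, neg_neg]
    have e4 : tmS (8 * m + 4) = - tmS m := by
      rw [show 8 * m + 4 = 2 * (2 * (2 * m + 1)) by ring]; simp only [tmS_even, tmS_odd]
    have e5 : tmS (8 * m + 5) = tmS m := by
      rw [show 8 * m + 5 = 2 * (2 * (2 * m + 1)) + 1 by ring]
      simp only [tmS_even, tmS_odd, neg_neg]
    have e6 : tmS (8 * m + 6) = tmS m := by
      rw [show 8 * m + 6 = 2 * (2 * (2 * m + 1) + 1) by ring]
      simp only [tmS_even, tmS_odd, neg_neg]
    have e7 : tmS (8 * m + 7) = - tmS m := by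
      rw [show 8 * m + 7 = 2 * (2 * (2 * m + 1) + 1) + 1 by ring]
      simp only [tmS_even, tmS_odd, neg_neg]
    rw [show 8 * (m + 1) = 8 * m + 7 + 1 by ring, show 2 * (m + 1) = 2 * m + 1 + 1 by ring]
    simp only [newmanSum_succ', e0, e1, e2, e3, e4, e5, e6, e7, tmS_even, tmS_odd, ih]
    obtain ⟨k, hk | hk | hk⟩ : ∃ k, m = 3 * k ∨ m = 3 * k + 1 ∨ m = 3 * k + 2 :=
      ⟨m / 3, by omega⟩
    · have c0 : (8 * m) % 3 = 0 := by omega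
      have c1 : (8 * m + 1) % 3 = 1 := by omega
      have c2 : (8 * m + 2) % 3 = 2 := by omega
      have c3 : (8 * m + 3) % 3 = 0 := by omega
      have c4 : (8 * m + 4) % 3 = 1 := by omega
      have c5 : (8 * m + 5) % 3 = 2 := by omega
      have c6 : (8 * m + 6) % 3 = 0 := by omega
      have c7 : (8 * m + 7) % 3 = 1 := by omega
      have d0 : (2 * m) % 3 = 0 := by omega
      have d1 : (2 * m + 1) % 3 = 1 := by omega
      rw [c0, c1, c2, c3, c4, c5, c6, c7, d0, d1]
      norm_num
      ring
    · have c0 : (8 * m) % 3 = 2 := by omega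
      have c1 : (8 * m + 1) % 3 = 0 := by omega
      have c2 : (8 * m + 2) % 3 = 1 := by omega
      have c3 : (8 * m + 3) % 3 = 2 := by omega
      have c4 : (8 * m + 4) % 3 = 0 := by omega
      have c5 : (8 * m + 5) % 3 = 1 := by omega
      have c6 : (8 * m + 6) % 3 = 2 := by omega
      have c7 : (8 * m + 7) % 3 = 0 := by omega
      have d0 : (2 * m) % 3 = 2 := by omega
      have d1 : (2 * m + 1) % 3 = 0 := by omega
      rw [c0, c1, c2, c3, c4, c5, c6, c7, d0, d1]
      norm_num
      ring
    · have c0 : (8 * m) % 3 = 1 := by omega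
      have c1 : (8 * m + 1) % 3 = 2 := by omega
      have c2 : (8 * m + 2) % 3 = 0 := by omega
      have c3 : (8 * m + 3) % 3 = 1 := by omega
      have c4 : (8 * m + 4) % 3 = 2 := by omega
      have c5 : (8 * m + 5) % 3 = 0 := by omega
      have c6 : (8 * m + 6) % 3 = 1 := by omega
      have c7 : (8 * m + 7) % 3 = 2 := by omega
      have d0 : (2 * m) % 3 = 1 := by omega
      have d1 : (2 * m + 1) % 3 = 2 := by omega
      rw [c0, c1, c2, c3, c4, c5, c6, c7, d0, d1]
      norm_num

theorem stmt_4 (n : ℕ) (hn : Even n) :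
    newmanSum 3 0 (4 * n) = 3 * newmanSum 3 0 n := by
  obtain ⟨m, rfl⟩ := hn
  rw [show 4 * (m + m) = 8 * m by ring, show m + m = 2 * m by ring]
  exact newman_aux m
end

section
/- For all natural numbers x ≤ y, S_{3,0}(8y) − S_{3,0}(8x) = 3·(S_{3,0}(2y) − S_{3,0}(2x)); equivalently, S_{3,0}([8x,8y)) = 3·S_{3,0}([2x,2y)). -/
theorem tm_two_mul (n : ℕ) : (-1 : ℤ) ^ ((Nat.digits 2 (2 * n)).sum) = (-1 : ℤ) ^ ((Nat.digits 2 n).sum) := by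
  rcases Nat.eq_zero_or_pos n with h | h
  · subst h; simp
  · rw [Nat.digits_def' (by norm_num) (by omega)]
    have h1 : 2 * n % 2 = 0 := by omega
    have h2 : 2 * n / 2 = n := by omega
    rw [h1, h2]; simp

theorem tm_two_mul_add (n : ℕ) : (-1 : ℤ) ^ ((Nat.digits 2 (2 * n + 1)).sum) = -(-1 : ℤ) ^ ((Nat.digits 2 n).sum) := by
  rw [Nat.digits_def' (by norm_num) (by omega)]
  have h1 : (2 * n + 1) % 2 = 1 := by omega
  have h2 : (2 * n + 1) / 2 = n := by omega
  rw [h1, h2, List.sum_cons, pow_add]; simp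

theorem newman_eight (x : ℕ) : newmanSum 3 0 (8 * x) = 3 * newmanSum 3 0 (2 * x) := by
  induction x with
  | zero => simp [newmanSum]
  | succ k ih =>
    unfold newmanSum at *
    have e8 : 8 * (k + 1) = 8 * k + 1 + 1 + 1 + 1 + 1 + 1 + 1 + 1 := by ring
    have e2 : 2 * (k + 1) = 2 * k + 1 + 1 := by ring
    rw [e8, e2]
    simp only [Finset.sum_range_succ]
    rw [ih]
    have a0 : 8 * k = 2 * (2 * (2 * k)) := by ring
    have a1 : 8 * k + 1 = 2 * (2 * (2 * k)) + 1 := by ring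
    have a2 : 8 * k + 1 + 1 = 2 * (2 * (2 * k) + 1) := by ring
    have a3 : 8 * k + 1 + 1 + 1 = 2 * (2 * (2 * k) + 1) + 1 := by ring
    have a4 : 8 * k + 1 + 1 + 1 + 1 = 2 * (2 * (2 * k + 1)) := by ring
    have a5 : 8 * k + 1 + 1 + 1 + 1 + 1 = 2 * (2 * (2 * k + 1)) + 1 := by ring
    have a6 : 8 * k + 1 + 1 + 1 + 1 + 1 + 1 = 2 * (2 * (2 * k + 1) + 1) := by ring
    have a7 : 8 * k + 1 + 1 + 1 + 1 + 1 + 1 + 1 = 2 * (2 * (2 * k + 1) + 1) + 1 := by ring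
    rw [a7, a6, a5, a4, a3, a2, a1, a0]
    simp only [tm_two_mul, tm_two_mul_add]
    generalize (-1 : ℤ) ^ ((Nat.digits 2 k).sum) = t
    have h0 : 2 * (2 * (2 * k)) % 3 = (2 * (k % 3)) % 3 := by omega
    have h1 : (2 * (2 * (2 * k)) + 1) % 3 = (2 * (k % 3) + 1) % 3 := by omega
    have h2 : (2 * (2 * (2 * k) + 1)) % 3 = (2 * (k % 3) + 2) % 3 := by omega
    have h3 : (2 * (2 * (2 * k) + 1) + 1) % 3 = (2 * (k % 3)) % 3 := by omega
    have h4 : (2 * (2 * (2 * k + 1))) % 3 = (2 * (k % 3) + 1) % 3 := by omega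
    have h5 : (2 * (2 * (2 * k + 1)) + 1) % 3 = (2 * (k % 3) + 2) % 3 := by omega
    have h6 : (2 * (2 * (2 * k + 1) + 1)) % 3 = (2 * (k % 3)) % 3 := by omega
    have h7 : (2 * (2 * (2 * k + 1) + 1) + 1) % 3 = (2 * (k % 3) + 1) % 3 := by omega
    have g0 : (2 * k) % 3 = (2 * (k % 3)) % 3 := by omega
    have g1 : (2 * k + 1) % 3 = (2 * (k % 3) + 1) % 3 := by omega
    rw [h0, h1, h2, h3, h4, h5, h6, h7, g0, g1]
    have hk : k % 3 = 0 ∨ k % 3 = 1 ∨ k % 3 = 2 := by omega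
    generalize (∑ n ∈ Finset.range (2 * k), if n % 3 = 0 then (-1 : ℤ) ^ ((Nat.digits 2 n).sum) else 0) = A
    rcases hk with h | h | h <;> rw [h] <;> norm_num <;> ring

theorem stmt_5 (x y : ℕ) (hxy : x ≤ y) :
    newmanSum 3 0 (8 * y) - newmanSum 3 0 (8 * x) =
      3 * (newmanSum 3 0 (2 * y) - newmanSum 3 0 (2 * x)) := by
  rw [newman_eight, newman_eight]; ring
end

section
/- For all natural numbers x ≤ y, S_{5,0}(32y) − S_{5,0}(32x) = 5·(S_{5,0}(2y) − S_{5,0}(2x)); equivalently, S_{5,0}([32x,32y)) = 5·S_{5,0}([2x,2y)). -/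
def tmSign (n : ℕ) : ℤ := (-1 : ℤ) ^ ((Nat.digits 2 n).sum)

theorem tmSign_even (n : ℕ) : tmSign (2 * n) = tmSign n := by
  unfold tmSign
  rcases Nat.eq_zero_or_pos n with h | h
  · subst h; simp
  · rw [Nat.digits_def' (by norm_num) (by omega)]
    have h1 : 2 * n % 2 = 0 := by omega
    have h2 : 2 * n / 2 = n := by omega
    rw [h1, h2]; simp

theorem tmSign_odd (n : ℕ) : tmSign (2 * n + 1) = - tmSign n := by
  unfold tmSign
  rw [Nat.digits_def' (by norm_num) (by omega)]
  have h1 : (2 * n + 1) % 2 = 1 := by omega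
  have h2 : (2 * n + 1) / 2 = n := by omega
  rw [h1, h2]; simp [pow_add]

theorem sum_block (f : ℕ → ℤ) (k y : ℕ) :
    ∑ n ∈ Finset.range (k * (y + 1)), f n =
      ∑ n ∈ Finset.range (k * y), f n + ∑ j ∈ Finset.range k, f (k * y + j) := by
  rw [Nat.mul_succ, Finset.sum_range_add]

theorem tmSign_step (k y j : ℕ) :
    tmSign (2 * k * y + j) = (if j % 2 = 0 then 1 else -1) * tmSign (k * y + j / 2) := by
  split_ifs with h
  · rw [one_mul, ← tmSign_even (k * y + j / 2)]; congr 1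
    have : 2 * (j / 2) = j := by omega
    rw [mul_add, this]; ring
  · rw [neg_one_mul, ← tmSign_odd]; congr 1
    have : 2 * (j / 2) + 1 = j := by omega
    rw [mul_add, add_assoc, this]; ring

theorem newman_scale (y : ℕ) : newmanSum 5 0 (32 * y) = 5 * newmanSum 5 0 (2 * y) := by
  induction y with
  | zero => simp [newmanSum]
  | succ y ih =>
    unfold newmanSum at ih ⊢
    rw [sum_block, sum_block, ih, mul_add]
    congr 1
    change ∑ j ∈ Finset.range 32, (if (32 * y + j) % 5 = 0 then tmSign (32 * y + j) else 0) =
      5 * ∑ j ∈ Finset.range 2, (if (2 * y + j) % 5 = 0 then tmSign (2 * y + j) else 0)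
    have s5 := tmSign_step 16 y
    have s4 := tmSign_step 8 y
    have s3 := tmSign_step 4 y
    have s2 := tmSign_step 2 y
    have s1 := tmSign_step 1 y
    norm_num only at s5 s4 s3 s2 s1
    have e32 : ∀ r, (32 * y + r) % 5 = (2 * (y % 5) + r) % 5 := by intro r; omega
    have e2 : ∀ r, (2 * y + r) % 5 = (2 * (y % 5) + r) % 5 := by intro r; omega
    simp only [e32, e2, s5, s4, s3, s2, s1]
    have : y % 5 < 5 := Nat.mod_lt _ (by norm_num)
    generalize y % 5 = c at this
    simp only [Finset.sum_range_succ, Finset.sum_range_zero]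
    interval_cases c <;> norm_num <;> ring

theorem stmt_6 (x y : ℕ) (hxy : x ≤ y) :
    newmanSum 5 0 (32 * y) - newmanSum 5 0 (32 * x) =
      5 * (newmanSum 5 0 (2 * y) - newmanSum 5 0 (2 * x)) := by
  rw [newman_scale, newman_scale]; ring
end

section
/- For all natural numbers x ≤ y, S_{7,0}(128y) − S_{7,0}(128x) = −7·(S_{7,0}(2y) − S_{7,0}(2x)); equivalently, S_{7,0}([128x,128y)) = −7·S_{7,0}([2x,2y)). -/
theorem tmS_bit (n b : ℕ) (hb : b < 2) : tmS (2 * n + b) = tmS n * tmS b := by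
  have h0 : tmS 0 = 1 := by simp [tmS]
  rcases Nat.eq_zero_or_pos (2 * n + b) with h | h
  · obtain rfl : n = 0 := by omega
    obtain rfl : b = 0 := by omega
    simp [h0]
  · have hd : (2 * n + b) / 2 = n := by omega
    have hm : (2 * n + b) % 2 = b := by omega
    have : tmS (2 * n + b) = (-1) ^ b * tmS n := by
      unfold tmS
      rw [Nat.digits_def' (by norm_num) h, hd, hm, List.sum_cons, pow_add]
    rw [this, mul_comm]
    interval_cases b <;> simp [tmS]

theorem tmS_mul (j : ℕ) : ∀ (k r : ℕ), r < 2 ^ j → tmS (2 ^ j * k + r) = tmS k * tmS r := by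
  induction j with
  | zero =>
    intro k r hr
    obtain rfl : r = 0 := by simpa using hr
    simp [tmS]
  | succ j ih =>
    intro k r hr
    have h1 : r / 2 < 2 ^ j := by rw [pow_succ] at hr; omega
    have h2 : 2 ^ (j + 1) * k + r = 2 * (2 ^ j * k + r / 2) + r % 2 := by
      rw [pow_succ, mul_comm (2 ^ j) 2, mul_assoc]; omega
    have h3 : tmS r = tmS (r / 2) * tmS (r % 2) := by
      rw [← tmS_bit _ _ (Nat.mod_lt _ (by norm_num)), Nat.div_add_mod]
    rw [h2, tmS_bit _ _ (Nat.mod_lt _ (by norm_num)), ih k _ h1, h3, mul_assoc]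

theorem newman_block (j k : ℕ) :
    newmanSum 7 0 (2 ^ j * (k + 1)) = newmanSum 7 0 (2 ^ j * k) +
      tmS k * ∑ r ∈ Finset.range (2 ^ j), if (2 ^ j * (k % 7) + r) % 7 = 0 then tmS r else 0 := by
  unfold newmanSum
  rw [mul_add, mul_one, Finset.sum_range_add, Finset.mul_sum]
  congr 1
  refine Finset.sum_congr rfl fun r hr => ?_
  have h1 : (2 ^ j * k + r) % 7 = (2 ^ j * (k % 7) + r) % 7 := by
    simp [Nat.add_mod, Nat.mul_mod]
  have h2 := tmS_mul j k r (Finset.mem_range.1 hr)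
  rw [h1, mul_ite, mul_zero, ← h2, tmS]

theorem newman_table : ∀ c < 7,
    (∑ r ∈ Finset.range (2 ^ 7), if (2 ^ 7 * c + r) % 7 = 0 then tmS r else 0) =
    -7 * ∑ r ∈ Finset.range (2 ^ 1), if (2 ^ 1 * c + r) % 7 = 0 then tmS r else 0 := by
  decide +kernel

theorem stmt_7 (x y : ℕ) (hxy : x ≤ y) :
    newmanSum 7 0 (128 * y) - newmanSum 7 0 (128 * x) =
      -7 * (newmanSum 7 0 (2 * y) - newmanSum 7 0 (2 * x)) := by
  induction y, hxy using Nat.le_induction with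
  | base => simp
  | succ k hk ih =>
    have h7 := newman_block 7 k
    have h1 := newman_block 1 k
    rw [newman_table _ (Nat.mod_lt _ (by norm_num))] at h7
    rw [show (2:ℕ) ^ 7 = 128 by norm_num] at h7
    rw [h7, show 2 * (k + 1) = 2 ^ 1 * (k + 1) by norm_num, h1, pow_one]
    linear_combination ih
end

section
/- For all natural numbers x ≤ y, S_{9,0}([512x,512y)) = 3·S_{9,0}([128x,128y)) + 3·S_{9,0}([8x,8y)) − 9·S_{9,0}([2x,2y)), where S_{9,0}([a,b)) = S_{9,0}(b) − S_{9,0}(a). -/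
theorem digits_even (n : ℕ) : (Nat.digits 2 (2 * n)).sum = (Nat.digits 2 n).sum := by
  rcases Nat.eq_zero_or_pos n with h | h
  · subst h; simp
  · rw [Nat.digits_def' (by norm_num) (by omega)]
    simp

theorem digits_odd (n : ℕ) : (Nat.digits 2 (2 * n + 1)).sum = (Nat.digits 2 n).sum + 1 := by
  rw [Nat.digits_def' (by norm_num) (by omega)]
  have h1 : (2 * n + 1) % 2 = 1 := by omega
  have h2 : (2 * n + 1) / 2 = n := by omega
  rw [h1, h2, List.sum_cons, add_comm]

theorem newman_rec (l a b : ℕ) (ha : ∀ n, (2 * n) % 9 = l ↔ n % 9 = a)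
    (hb : ∀ n, (2 * n + 1) % 9 = l ↔ n % 9 = b) (x : ℕ) :
    newmanSum 9 l (2 * x) = newmanSum 9 a x - newmanSum 9 b x := by
  induction x with
  | zero => simp [newmanSum]
  | succ x ih =>
    unfold newmanSum at *
    rw [show 2 * (x + 1) = 2 * x + 1 + 1 by ring, Finset.sum_range_succ, Finset.sum_range_succ, ih,
      Finset.sum_range_succ, Finset.sum_range_succ, digits_even, digits_odd]
    simp only [ha, hb, pow_succ]
    split_ifs <;> ring

theorem newman_full (y : ℕ) : newmanSum 9 0 (512 * y) =
    3 * newmanSum 9 0 (128 * y) + 3 * newmanSum 9 0 (8 * y) - 9 * newmanSum 9 0 (2 * y) := by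
  have r0 := newman_rec 0 0 4 (by omega) (by omega)
  have r1 := newman_rec 1 5 0 (by omega) (by omega)
  have r2 := newman_rec 2 1 5 (by omega) (by omega)
  have r3 := newman_rec 3 6 1 (by omega) (by omega)
  have r4 := newman_rec 4 2 6 (by omega) (by omega)
  have r5 := newman_rec 5 7 2 (by omega) (by omega)
  have r6 := newman_rec 6 3 7 (by omega) (by omega)
  have r7 := newman_rec 7 8 3 (by omega) (by omega)
  have r8 := newman_rec 8 4 8 (by omega) (by omega)
  rw [show 512 * y = 2 * (2 * (2 * (2 * (2 * (2 * (2 * (2 * (2 * y)))))))) by ring,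
    show 128 * y = 2 * (2 * (2 * (2 * (2 * (2 * (2 * y)))))) by ring,
    show 8 * y = 2 * (2 * (2 * y)) by ring]
  simp only [r0, r1, r2, r3, r4, r5, r6, r7, r8]
  ring

theorem stmt_8 (x y : ℕ) (hxy : x ≤ y) :
    newmanSum 9 0 (512 * y) - newmanSum 9 0 (512 * x) =
      3 * (newmanSum 9 0 (128 * y) - newmanSum 9 0 (128 * x)) +
        3 * (newmanSum 9 0 (8 * y) - newmanSum 9 0 (8 * x)) -
          9 * (newmanSum 9 0 (2 * y) - newmanSum 9 0 (2 * x)) := by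
  rw [newman_full x, newman_full y]
  ring
end

section
/- There exists a constant C > 0 such that for all natural numbers n ≥ 1, |S_{5,0}(n)| ≤ C · n^{ln 5 / ln 16}, i.e. S_{5,0}(n) = O(n^{0.58048...}). -/
def tm (n : ℕ) : ℤ := (-1 : ℤ) ^ ((Nat.digits 2 n).sum)

theorem tm_even (n : ℕ) : tm (2 * n) = tm n := by
  rcases Nat.eq_zero_or_pos n with h | h
  · subst h; rfl
  · unfold tm
    rw [Nat.digits_def' (by norm_num) (by omega)]
    simp

theorem tm_odd (n : ℕ) : tm (2 * n + 1) = - tm n := by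
  unfold tm
  rw [Nat.digits_def' (by norm_num) (by omega)]
  have h1 : (2 * n + 1) % 2 = 1 := by omega
  have h2 : (2 * n + 1) / 2 = n := by omega
  rw [h1, h2, List.sum_cons, pow_add]
  ring

theorem tm_abs (n : ℕ) : |tm n| = 1 := by
  unfold tm; simp [abs_pow]

theorem nS_succ (x : ℕ) : newmanSum 5 0 (x + 1) =
    newmanSum 5 0 x + if x % 5 = 0 then tm x else 0 := by
  unfold newmanSum tm
  rw [Finset.sum_range_succ]

theorem nS_add (a k : ℕ) : |newmanSum 5 0 (a + k)| ≤ |newmanSum 5 0 a| + k := by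
  induction k with
  | zero => simp
  | succ k ih =>
    rw [← add_assoc, nS_succ]
    have h := tm_abs (a + k)
    have h2 : |if (a + k) % 5 = 0 then tm (a + k) else 0| ≤ 1 := by
      split_ifs
      · exact h.le
      · simp
    have h3 := abs_add_le (newmanSum 5 0 (a + k)) (if (a + k) % 5 = 0 then tm (a + k) else 0)
    push_cast
    linarith

def tsum2 (x : ℕ) : ℤ := ∑ n ∈ Finset.range x, tm n

theorem tsum2_even (m : ℕ) : tsum2 (2 * m) = 0 := by
  induction m with
  | zero => rfl
  | succ m ih =>
    unfold tsum2 at *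
    rw [show 2 * (m + 1) = 2 * m + 1 + 1 by ring, Finset.sum_range_succ, Finset.sum_range_succ,
      ih, tm_even, tm_odd]
    ring

theorem tsum2_abs (m : ℕ) : |tsum2 m| ≤ 1 := by
  rcases Nat.even_or_odd' m with ⟨k, h | h⟩
  · rw [h, tsum2_even]; simp
  · have := tsum2_even k
    unfold tsum2 at *
    rw [h, Finset.sum_range_succ, this, zero_add, tm_abs]

theorem nS_16 (m : ℕ) : newmanSum 5 0 (16 * m) = 5 * newmanSum 5 0 m - tsum2 m := by
  induction m with
  | zero => rfl
  | succ m ih =>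
    have e (n : ℕ) : tm (4 * n) = tm n := by
      rw [show 4 * n = 2 * (2 * n) by ring, tm_even, tm_even]
    have e1 (n : ℕ) : tm (4 * n + 1) = - tm n := by
      rw [show 4 * n + 1 = 2 * (2 * n) + 1 by ring, tm_odd, tm_even]
    have e2 (n : ℕ) : tm (4 * n + 2) = - tm n := by
      rw [show 4 * n + 2 = 2 * (2 * n + 1) by ring, tm_even, tm_odd]
    have e3 (n : ℕ) : tm (4 * n + 3) = tm n := by
      rw [show 4 * n + 3 = 2 * (2 * n + 1) + 1 by ring, tm_odd, tm_odd, neg_neg]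
    have a0 : tm (16 * m) = tm m := by
      rw [show 16 * m = 4 * (4 * m) by ring, e, e]
    have a1 : tm (16 * m + 1) = - tm m := by
      rw [show 16 * m + 1 = 4 * (4 * m) + 1 by ring, e1, e]
    have a2 : tm (16 * m + 2) = - tm m := by
      rw [show 16 * m + 2 = 4 * (4 * m) + 2 by ring, e2, e]
    have a3 : tm (16 * m + 3) = tm m := by
      rw [show 16 * m + 3 = 4 * (4 * m) + 3 by ring, e3, e]
    have a4 : tm (16 * m + 4) = - tm m := by
      rw [show 16 * m + 4 = 4 * (4 * m + 1) by ring, e, e1]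
    have a5 : tm (16 * m + 5) = tm m := by
      rw [show 16 * m + 5 = 4 * (4 * m + 1) + 1 by ring, e1, e1, neg_neg]
    have a6 : tm (16 * m + 6) = tm m := by
      rw [show 16 * m + 6 = 4 * (4 * m + 1) + 2 by ring, e2, e1, neg_neg]
    have a7 : tm (16 * m + 7) = - tm m := by
      rw [show 16 * m + 7 = 4 * (4 * m + 1) + 3 by ring, e3, e1]
    have a8 : tm (16 * m + 8) = - tm m := by
      rw [show 16 * m + 8 = 4 * (4 * m + 2) by ring, e, e2]
    have a9 : tm (16 * m + 9) = tm m := by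
      rw [show 16 * m + 9 = 4 * (4 * m + 2) + 1 by ring, e1, e2, neg_neg]
    have a10 : tm (16 * m + 10) = tm m := by
      rw [show 16 * m + 10 = 4 * (4 * m + 2) + 2 by ring, e2, e2, neg_neg]
    have a11 : tm (16 * m + 11) = - tm m := by
      rw [show 16 * m + 11 = 4 * (4 * m + 2) + 3 by ring, e3, e2]
    have a12 : tm (16 * m + 12) = tm m := by
      rw [show 16 * m + 12 = 4 * (4 * m + 3) by ring, e, e3]
    have a13 : tm (16 * m + 13) = - tm m := by
      rw [show 16 * m + 13 = 4 * (4 * m + 3) + 1 by ring, e1, e3]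
    have a14 : tm (16 * m + 14) = - tm m := by
      rw [show 16 * m + 14 = 4 * (4 * m + 3) + 2 by ring, e2, e3]
    have a15 : tm (16 * m + 15) = tm m := by
      rw [show 16 * m + 15 = 4 * (4 * m + 3) + 3 by ring, e3, e3]
    have hT : tsum2 (m + 1) = tsum2 m + tm m := by
      unfold tsum2; rw [Finset.sum_range_succ]
    rw [show 16 * (m + 1) = 16 * m + 15 + 1 by ring]
    rw [hT, nS_succ m]
    iterate 16 rw [nS_succ]
    rw [ih, a0, a1, a2, a3, a4, a5, a6, a7, a8, a9, a10, a11, a12, a13, a14, a15]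
    have hm (i : ℕ) : (16 * m + i) % 5 = (m % 5 + i) % 5 := by omega
    have hm0 : (16 * m) % 5 = m % 5 := by omega
    simp only [hm, hm0]
    have hlt : m % 5 < 5 := Nat.mod_lt _ (by norm_num)
    generalize m % 5 = q at hlt ⊢
    interval_cases q <;> norm_num <;> ring

theorem nS_rec (n : ℕ) : |newmanSum 5 0 n| ≤ 5 * |newmanSum 5 0 (n / 16)| + 17 := by
  have h1 := nS_add (16 * (n / 16)) (n % 16)
  rw [Nat.div_add_mod, nS_16] at h1
  have h2 := abs_sub (5 * newmanSum 5 0 (n / 16)) (tsum2 (n / 16))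
  have h3 := tsum2_abs (n / 16)
  rw [abs_mul, abs_of_pos (by norm_num : (0 : ℤ) < 5)] at h2
  have h4 : ((n % 16 : ℕ) : ℤ) ≤ 16 := by omega
  linarith

theorem nS_bound (n : ℕ) : 1 ≤ n →
    (|newmanSum 5 0 n| : ℝ) + 5 ≤ 22 * (n : ℝ) ^ (Real.log 5 / Real.log 16) := by
  have hα : 0 ≤ Real.log 5 / Real.log 16 :=
    div_nonneg (Real.log_nonneg (by norm_num)) (Real.log_nonneg (by norm_num))
  have h16 : (16 : ℝ) ^ (Real.log 5 / Real.log 16) = 5 := by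
    have : Real.log 16 ≠ 0 := (Real.log_pos (by norm_num)).ne'
    rw [Real.rpow_def_of_pos (by norm_num), mul_div_cancel₀ _ this, Real.exp_log (by norm_num)]
  induction n using Nat.strong_induction_on with
  | _ n ih =>
    intro hn
    have hr : (|newmanSum 5 0 n| : ℝ) ≤ 5 * |(newmanSum 5 0 (n / 16) : ℝ)| + 17 := by
      exact_mod_cast nS_rec n
    by_cases h : n < 16
    · have h0 : n / 16 = 0 := by omega
      rw [h0] at hr
      have h00 : newmanSum 5 0 0 = 0 := rfl
      rw [h00] at hr
      have h1 : (1 : ℝ) ≤ (n : ℝ) ^ (Real.log 5 / Real.log 16) :=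
        Real.one_le_rpow (by exact_mod_cast hn) hα
      norm_num at hr
      linarith
    · have h1 := ih (n / 16) (by omega) (by omega)
      have h2 : (16 : ℝ) * ((n / 16 : ℕ) : ℝ) ≤ n := by
        exact_mod_cast Nat.mul_div_le n 16
      have h3 := Real.rpow_le_rpow (by positivity) h2 hα
      rw [Real.mul_rpow (by norm_num) (by positivity), h16] at h3
      linarith

theorem stmt_10 :
    ∃ C : ℝ, 0 < C ∧ ∀ n : ℕ, 1 ≤ n →
      (|newmanSum 5 0 n| : ℝ) ≤ C * (n : ℝ) ^ (Real.log 5 / Real.log 16) := by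
  refine ⟨22, by norm_num, fun n hn => ?_⟩
  have := nS_bound n hn
  linarith
end

section
/- There exists a constant C > 0 such that for all natural numbers n ≥ 1, |S_{7,0}(n)| ≤ C · n^{ln 7 / ln 64}, i.e. S_{7,0}(n) = O(n^{0.46789...}). -/
noncomputable def sg (n : ℕ) : ℝ := (-1 : ℝ) ^ ((Nat.digits 2 n).sum)

lemma sg_even (n : ℕ) : sg (2 * n) = sg n := by
  rcases Nat.eq_zero_or_pos n with rfl | h
  · simp
  · unfold sg
    rw [Nat.digits_def' (by norm_num) (by omega : 0 < 2 * n)]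
    simp

lemma sg_odd (n : ℕ) : sg (2 * n + 1) = - sg n := by
  unfold sg
  rw [Nat.digits_def' (by norm_num) (by omega : 0 < 2 * n + 1)]
  have h1 : (2 * n + 1) % 2 = 1 := by omega
  have h2 : (2 * n + 1) / 2 = n := by omega
  rw [h1, h2, List.sum_cons, pow_add]
  simp

lemma sg_abs (n : ℕ) : |sg n| = 1 := by
  unfold sg; simp

abbrev E7 := EuclideanSpace ℝ (Fin 7)

noncomputable def ev (n : ℕ) : E7 :=
  WithLp.toLp 2 (fun r : Fin 7 => if n % 7 = (r : ℕ) then (1 : ℝ) else 0)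

noncomputable def W (x : ℕ) : E7 := ∑ n ∈ Finset.range x, sg n • ev n

noncomputable def L (v : E7) : E7 :=
  WithLp.toLp 2 (fun r : Fin 7 =>
    - v (r + 6) - v (r + 5) - v (r + 3) + v (r + 4) + v (r + 2) + v (r + 1))

lemma L_norm (v : E7) : ‖L v‖ ≤ √7 * ‖v‖ := by
  rw [EuclideanSpace.norm_eq, EuclideanSpace.norm_eq, ← Real.sqrt_mul (by norm_num)]
  apply Real.sqrt_le_sqrt
  simp only [L, Real.norm_eq_abs, sq_abs, Fin.sum_univ_succ, Fin.sum_univ_zero]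
  simp only [Fin.reduceAdd, Fin.reduceSucc, Fin.isValue, Fin.succ_zero_eq_one, zero_add]
  nlinarith [sq_nonneg (v 0 + v 1 + v 2 + v 3 + v 4 + v 5 + v 6)]

lemma L_add (v w : E7) : L (v + w) = L v + L w := by
  ext r; simp [L]; ring

lemma L_smul (c : ℝ) (v : E7) : L (c • v) = c • L v := by
  ext r; simp [L]; ring

lemma L_ev (x : ℕ) : L (ev x) = ev (8*x) - ev (8*x+1) - ev (8*x+2) + ev (8*x+3) - ev (8*x+4)
    + ev (8*x+5) + ev (8*x+6) - ev (8*x+7) := by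
  have key : ∀ j, (8 * x + j) % 7 = (x % 7 + j) % 7 := by intro j; omega
  have k0 : (8 * x) % 7 = x % 7 := by omega
  have hx : x % 7 < 7 := Nat.mod_lt _ (by norm_num)
  ext r
  simp only [L, ev, PiLp.add_apply, PiLp.sub_apply, key, k0]
  generalize x % 7 = y at hx
  interval_cases y <;> fin_cases r <;> simp

lemma W_eight (x : ℕ) : W (8 * x) = L (W x) := by
  induction x with
  | zero => ext r; simp [W, L]
  | succ x ih =>
    have h : W (x + 1) = W x + sg x • ev x := by simp [W, Finset.sum_range_succ]
    rw [h, L_add, L_smul, ← ih, L_ev]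
    have e4 : sg (4 * x) = sg x := by rw [show 4 * x = 2 * (2 * x) by ring, sg_even, sg_even]
    have h0 : sg (8*x) = sg x := by
      rw [show 8 * x = 2 * (4 * x) by ring, sg_even, e4]
    have h1 : sg (8*x+1) = -sg x := by
      rw [show 8 * x + 1 = 2 * (4 * x) + 1 by ring, sg_odd, e4]
    have h2 : sg (8*x+2) = -sg x := by
      rw [show 8 * x + 2 = 2 * (2 * (2 * x) + 1) by ring, sg_even, sg_odd, sg_even]
    have h3 : sg (8*x+3) = sg x := by
      rw [show 8 * x + 3 = 2 * (2 * (2 * x) + 1) + 1 by ring, sg_odd, sg_odd, sg_even, neg_neg]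
    have h4 : sg (8*x+4) = -sg x := by
      rw [show 8 * x + 4 = 2 * (2 * (2 * x + 1)) by ring, sg_even, sg_even, sg_odd]
    have h5 : sg (8*x+5) = sg x := by
      rw [show 8 * x + 5 = 2 * (2 * (2 * x + 1)) + 1 by ring, sg_odd, sg_even, sg_odd, neg_neg]
    have h6 : sg (8*x+6) = sg x := by
      rw [show 8 * x + 6 = 2 * (2 * (2 * x + 1) + 1) by ring, sg_even, sg_odd, sg_odd, neg_neg]
    have h7 : sg (8*x+7) = -sg x := by
      rw [show 8 * x + 7 = 2 * (2 * (2 * x + 1) + 1) + 1 by ring, sg_odd, sg_odd, sg_odd, neg_neg]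
    rw [show 8 * (x + 1) = 8 * x + 8 by ring]
    unfold W
    simp only [Finset.sum_range_succ, show 8 * x + 8 = 8*x+7+1 from rfl,
      show 8 * x + 7 = 8*x+6+1 from rfl, show 8 * x + 6 = 8*x+5+1 from rfl,
      show 8 * x + 5 = 8*x+4+1 from rfl, show 8 * x + 4 = 8*x+3+1 from rfl,
      show 8 * x + 3 = 8*x+2+1 from rfl, show 8 * x + 2 = 8*x+1+1 from rfl]
    simp only [add_assoc, Nat.reduceAdd]
    rw [h0, h1, h2, h3, h4, h5, h6, h7]
    module

lemma ev_norm (n : ℕ) : ‖ev n‖ ≤ 1 := by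
  have hx : n % 7 < 7 := Nat.mod_lt _ (by norm_num)
  rw [EuclideanSpace.norm_eq]
  simp only [ev]
  generalize n % 7 = y at hx
  interval_cases y <;> simp <;> decide

lemma W_add (x j : ℕ) : ‖W (x + j)‖ ≤ ‖W x‖ + j := by
  induction j with
  | zero => simp
  | succ j ih =>
    have h : W (x + j + 1) = W (x + j) + sg (x + j) • ev (x + j) := by
      simp [W, Finset.sum_range_succ]
    rw [← add_assoc, h]
    have h2 : ‖sg (x + j) • ev (x + j)‖ ≤ 1 := by
      rw [norm_smul, Real.norm_eq_abs, sg_abs, one_mul]; exact ev_norm _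
    push_cast
    linarith [norm_add_le (W (x + j)) (sg (x + j) • ev (x + j))]

lemma eight_rpow : (8 : ℝ) ^ (Real.log 7 / Real.log 64) = √7 := by
  have h64 : Real.log 64 = 2 * Real.log 8 := by
    rw [show (64 : ℝ) = 8 ^ 2 by norm_num, Real.log_pow]; norm_num
  have h8 : Real.log 8 ≠ 0 := (Real.log_pos (by norm_num)).ne'
  rw [Real.sqrt_eq_rpow, Real.rpow_def_of_pos (by norm_num), Real.rpow_def_of_pos (by norm_num), h64]
  congr 1
  field_simp

lemma alpha_nonneg : 0 ≤ Real.log 7 / Real.log 64 :=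
  div_nonneg (Real.log_nonneg (by norm_num)) (Real.log_nonneg (by norm_num))

lemma W_bound (n : ℕ) (hn : 1 ≤ n) :
    ‖W n‖ ≤ 14 * (n : ℝ) ^ (Real.log 7 / Real.log 64) - 7 := by
  induction n using Nat.strong_induction_on with
  | _ n ih =>
    rcases lt_or_ge n 8 with h | h
    · have h1 : (1 : ℝ) ≤ (n : ℝ) ^ (Real.log 7 / Real.log 64) :=
        Real.one_le_rpow (by exact_mod_cast hn) alpha_nonneg
      have h2 := W_add 0 n
      have h3 : ‖W 0‖ = 0 := by simp [W]
      have h4 : (n : ℝ) ≤ 7 := by exact_mod_cast (by omega : n ≤ 7)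
      rw [zero_add] at h2
      linarith
    · have hq := ih (n / 8) (by omega) (by omega)
      have h2 := W_add (8 * (n / 8)) (n % 8)
      rw [Nat.div_add_mod, W_eight] at h2
      have h3 := L_norm (W (n / 8))
      have h4 : ((n % 8 : ℕ) : ℝ) ≤ 7 := by exact_mod_cast (by omega : n % 8 ≤ 7)
      have h5 : √7 * ((n / 8 : ℕ) : ℝ) ^ (Real.log 7 / Real.log 64)
          ≤ (n : ℝ) ^ (Real.log 7 / Real.log 64) := by
        rw [← eight_rpow, ← Real.mul_rpow (by norm_num) (by positivity)]
        apply Real.rpow_le_rpow (by positivity) _ alpha_nonneg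
        exact_mod_cast (by omega : 8 * (n / 8) ≤ n)
      have h6 : (2 : ℝ) ≤ √7 := Real.le_sqrt_of_sq_le (by norm_num)
      have h7 := mul_le_mul_of_nonneg_left hq (by positivity : 0 ≤ √7)
      linarith

theorem stmt_11 :
    ∃ C : ℝ, 0 < C ∧ ∀ n : ℕ, 1 ≤ n →
      (|newmanSum 7 0 n| : ℝ) ≤ C * (n : ℝ) ^ (Real.log 7 / Real.log 64) := by
  refine ⟨14, by norm_num, fun n hn => ?_⟩
  have h1 : (newmanSum 7 0 n : ℝ) = W n 0 := by
    simp [newmanSum, W, ev, sg]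
  have h2 := PiLp.norm_apply_le (W n) 0
  rw [Real.norm_eq_abs, ← h1] at h2
  linarith [W_bound n hn]
end

section
/- There exists a constant C > 0 such that for all natural numbers n ≥ 1, |S_{5,0,4}(n)| ≤ C · n^{ln(5 + 2√5) / ln 16}, i.e. S_{5,0,4}(n) = O(n^{0.81092...}). -/
/-- The generalized Newman sum in base 4:
`S_{m,l,4}(x) = ∑_{0 ≤ n < x, n ≡ l (mod m)} (-1)^{σ₄(n)}`,
where `σ₄(n)` is the sum of the base-4 digits of `n`. -/
def newmanSum4 (m l x : ℕ) : ℤ :=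
  ∑ n ∈ Finset.range x, if n % m = l then (-1 : ℤ) ^ ((Nat.digits 4 n).sum) else 0


noncomputable def sg4 (n : ℕ) : ℂ := (-1 : ℂ) ^ ((Nat.digits 4 n).sum)

noncomputable def tw4 (z : ℂ) (x : ℕ) : ℂ := ∑ n ∈ Finset.range x, sg4 n * z ^ n

lemma sg4_step (q b : ℕ) (hb : b < 4) : sg4 (4 * q + b) = sg4 q * (-1) ^ b := by
  unfold sg4
  rcases Nat.eq_zero_or_pos (4 * q + b) with h | h
  · have h1 : q = 0 := by omega
    have h2 : b = 0 := by omega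
    subst h1; subst h2; simp
  · rw [Nat.digits_def' (by norm_num) h]
    have h1 : (4 * q + b) % 4 = b := by omega
    have h2 : (4 * q + b) / 4 = q := by omega
    rw [h1, h2, List.sum_cons, pow_add, mul_comm]

lemma sg4_step2 (q a b : ℕ) (ha : a < 4) (hb : b < 4) :
    sg4 (16 * q + (4 * a + b)) = sg4 q * (-1) ^ (a + b) := by
  have : 16 * q + (4 * a + b) = 4 * (4 * q + a) + b := by ring
  rw [this, sg4_step _ _ hb, sg4_step _ _ ha, pow_add, mul_assoc]

noncomputable def mu4 (z : ℂ) : ℂ := 4 - 3 * z + z ^ 2 + z ^ 3 - 3 * z ^ 4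

lemma tw4_mul (z : ℂ) (hz : z ^ 5 = 1) (q : ℕ) : tw4 z (16 * q) = mu4 z * tw4 z q := by
  induction q with
  | zero => simp [tw4]
  | succ q ih =>
    have e : tw4 z (16 * (q + 1)) = tw4 z (16 * q) +
        ∑ r ∈ Finset.range 16, sg4 (16 * q + r) * z ^ (16 * q + r) := by
      unfold tw4
      rw [mul_add, mul_one, Finset.sum_range_add]
    have e2 : tw4 z (q + 1) = tw4 z q + sg4 q * z ^ q := by
      unfold tw4; rw [Finset.sum_range_succ]
    have h16 : z ^ (16 * q) = z ^ q := by
      rw [pow_mul]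
      congr 1
      calc z ^ 16 = (z ^ 5) ^ 3 * z := by ring
        _ = z := by rw [hz]; ring
    have key : ∑ r ∈ Finset.range 16, sg4 (16 * q + r) * z ^ (16 * q + r)
        = mu4 z * (sg4 q * z ^ q) := by
      have s (a b : ℕ) (ha : a < 4) (hb : b < 4) := sg4_step2 q a b ha hb
      simp only [Finset.sum_range_succ, Finset.sum_range_zero, pow_add, h16]
      rw [s 0 0 (by norm_num) (by norm_num), s 0 1 (by norm_num) (by norm_num),
        s 0 2 (by norm_num) (by norm_num), s 0 3 (by norm_num) (by norm_num),
        s 1 0 (by norm_num) (by norm_num), s 1 1 (by norm_num) (by norm_num),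
        s 1 2 (by norm_num) (by norm_num), s 1 3 (by norm_num) (by norm_num),
        s 2 0 (by norm_num) (by norm_num), s 2 1 (by norm_num) (by norm_num),
        s 2 2 (by norm_num) (by norm_num), s 2 3 (by norm_num) (by norm_num),
        s 3 0 (by norm_num) (by norm_num), s 3 1 (by norm_num) (by norm_num),
        s 3 2 (by norm_num) (by norm_num), s 3 3 (by norm_num) (by norm_num)]
      unfold mu4
      have p6 : z ^ 6 = z := by rw [show z ^ 6 = z ^ 5 * z by ring, hz]; ring
      have p7 : z ^ 7 = z ^ 2 := by rw [show z ^ 7 = z ^ 5 * z ^ 2 by ring, hz]; ring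
      have p8 : z ^ 8 = z ^ 3 := by rw [show z ^ 8 = z ^ 5 * z ^ 3 by ring, hz]; ring
      have p9 : z ^ 9 = z ^ 4 := by rw [show z ^ 9 = z ^ 5 * z ^ 4 by ring, hz]; ring
      have p10 : z ^ 10 = 1 := by rw [show z ^ 10 = (z ^ 5) ^ 2 by ring, hz]; ring
      have p11 : z ^ 11 = z := by rw [show z ^ 11 = (z ^ 5) ^ 2 * z by ring, hz]; ring
      have p12 : z ^ 12 = z ^ 2 := by rw [show z ^ 12 = (z ^ 5) ^ 2 * z ^ 2 by ring, hz]; ring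
      have p13 : z ^ 13 = z ^ 3 := by rw [show z ^ 13 = (z ^ 5) ^ 2 * z ^ 3 by ring, hz]; ring
      have p14 : z ^ 14 = z ^ 4 := by rw [show z ^ 14 = (z ^ 5) ^ 2 * z ^ 4 by ring, hz]; ring
      have p15 : z ^ 15 = 1 := by rw [show z ^ 15 = (z ^ 5) ^ 3 by ring, hz]; ring
      rw [hz, p6, p7, p8, p9, p10, p11, p12, p13, p14, p15]
      ring
    rw [e, e2, ih, key]; ring

lemma mu4_norm (z : ℂ) (hz : z ^ 5 = 1) : ‖mu4 z‖ ≤ 5 + 2 * Real.sqrt 5 := by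
  have h5 : Real.sqrt 5 ^ 2 = 5 := Real.sq_sqrt (by norm_num)
  have h5c : ((Real.sqrt 5 : ℝ) : ℂ) ^ 2 = 5 := by exact_mod_cast h5
  have hs : 0 ≤ Real.sqrt 5 := Real.sqrt_nonneg 5
  have hfac : (z - 1) * (1 + z + z ^ 2 + z ^ 3 + z ^ 4) = 0 := by
    linear_combination hz
  rcases mul_eq_zero.mp hfac with h | h
  · have : z = 1 := sub_eq_zero.mp h
    subst this
    have : mu4 1 = 0 := by unfold mu4; norm_num
    rw [this, norm_zero]; positivity
  · have hu : (z + z ^ 4) ^ 2 + (z + z ^ 4) - 1 = 0 := by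
      linear_combination h + (2 + z ^ 3) * hz
    have hm : mu4 z = 3 - 4 * (z + z ^ 4) := by
      unfold mu4; linear_combination h
    have hq : (mu4 z - ((5 + 2 * Real.sqrt 5 : ℝ) : ℂ)) *
        (mu4 z - ((5 - 2 * Real.sqrt 5 : ℝ) : ℂ)) = 0 := by
      rw [hm]; push_cast
      linear_combination 16 * hu - 4 * h5c
    rcases mul_eq_zero.mp hq with h | h
    · rw [sub_eq_zero.mp h, Complex.norm_real, Real.norm_eq_abs, abs_of_nonneg (by positivity)]
    · rw [sub_eq_zero.mp h, Complex.norm_real, Real.norm_eq_abs, abs_le]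
      constructor <;> linarith

lemma sg4_norm (n : ℕ) : ‖sg4 n‖ = 1 := by simp [sg4]

lemma tw4_add (z : ℂ) (hz : ‖z‖ = 1) (a r : ℕ) : ‖tw4 z (a + r)‖ ≤ ‖tw4 z a‖ + r := by
  induction r with
  | zero => simp
  | succ r ih =>
    have : tw4 z (a + (r + 1)) = tw4 z (a + r) + sg4 (a + r) * z ^ (a + r) := by
      unfold tw4; rw [← add_assoc, Finset.sum_range_succ]
    rw [this]
    have h := norm_add_le (tw4 z (a + r)) (sg4 (a + r) * z ^ (a + r))
    rw [norm_mul, norm_pow, hz, sg4_norm] at h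
    push_cast
    simp at h
    linarith

lemma tw4_bound (z : ℂ) (hz : z ^ 5 = 1) (n : ℕ) (hn : 1 ≤ n) :
    ‖tw4 z n‖ ≤ 32 * (n : ℝ) ^ (Real.log (5 + 2 * Real.sqrt 5) / Real.log 16) - 16 := by
  have hz1 : ‖z‖ = 1 := Complex.norm_eq_one_of_pow_eq_one hz (by norm_num)
  have hs : 0 ≤ Real.sqrt 5 := Real.sqrt_nonneg 5
  set L := 5 + 2 * Real.sqrt 5 with hL
  set α := Real.log L / Real.log 16 with hα
  have hl16 : 0 < Real.log 16 := Real.log_pos (by norm_num)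
  have hα0 : 0 ≤ α := div_nonneg (Real.log_nonneg (by linarith)) hl16.le
  have h16 : (16 : ℝ) ^ α = L := by
    rw [Real.rpow_def_of_pos (by norm_num), hα, mul_div_cancel₀ _ hl16.ne', Real.exp_log (by linarith)]
  induction n using Nat.strong_induction_on with
  | _ n ih =>
    rcases lt_or_ge n 16 with h | h
    · have h1 := tw4_add z hz1 0 n
      have h0 : tw4 z 0 = 0 := by simp [tw4]
      rw [h0, norm_zero, zero_add, zero_add] at h1
      have h2 : (n : ℝ) ≤ 16 := by exact_mod_cast h.le
      have h3 : 1 ≤ (n : ℝ) ^ α := Real.one_le_rpow (by exact_mod_cast hn) hα0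
      linarith
    · have hq := ih (n / 16) (by omega) (by omega)
      have h1 := tw4_add z hz1 (16 * (n / 16)) (n % 16)
      rw [Nat.div_add_mod, tw4_mul z hz, norm_mul] at h1
      have h2 : ((n % 16 : ℕ) : ℝ) ≤ 16 := by exact_mod_cast (Nat.mod_lt n (by norm_num)).le
      have h3 : ‖mu4 z‖ * ‖tw4 z (n / 16)‖ ≤ L * (32 * ((n / 16 : ℕ) : ℝ) ^ α - 16) :=
        mul_le_mul (mu4_norm z hz) hq (norm_nonneg _) (by linarith)
      have h4 : L * ((n / 16 : ℕ) : ℝ) ^ α ≤ (n : ℝ) ^ α := by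
        rw [← h16, ← Real.mul_rpow (by norm_num) (by positivity)]
        apply Real.rpow_le_rpow (by positivity) _ hα0
        exact_mod_cast Nat.mul_div_le n 16
      nlinarith

lemma newman_eq (ζ : ℂ) (hζ : IsPrimitiveRoot ζ 5) (x : ℕ) :
    ((newmanSum4 5 0 x : ℤ) : ℂ) * 5 = ∑ k ∈ Finset.range 5, tw4 (ζ ^ k) x := by
  unfold tw4 newmanSum4
  rw [Finset.sum_comm, Int.cast_sum, Finset.sum_mul]
  refine Finset.sum_congr rfl fun n _ => ?_
  rw [← Finset.mul_sum]
  have e : ∑ k ∈ Finset.range 5, (ζ ^ k) ^ n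
      = 1 + ζ ^ n + (ζ ^ n) ^ 2 + (ζ ^ n) ^ 3 + (ζ ^ n) ^ 4 := by
    simp only [Finset.sum_range_succ, Finset.sum_range_zero]
    ring
  rw [e]
  have h5 : (ζ ^ n) ^ 5 = 1 := by rw [← pow_mul, mul_comm, pow_mul, hζ.pow_eq_one, one_pow]
  split_ifs with h
  · have : ζ ^ n = 1 := (hζ.pow_eq_one_iff_dvd n).2 (Nat.dvd_of_mod_eq_zero h)
    rw [this]; unfold sg4; push_cast; norm_num
  · have h1 : ζ ^ n ≠ 1 := fun h' => h (Nat.mod_eq_zero_of_dvd ((hζ.pow_eq_one_iff_dvd n).1 h'))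
    have : (ζ ^ n - 1) * (1 + ζ ^ n + (ζ ^ n) ^ 2 + (ζ ^ n) ^ 3 + (ζ ^ n) ^ 4) = 0 := by
      linear_combination h5
    rcases mul_eq_zero.mp this with h2 | h2
    · exact absurd (sub_eq_zero.mp h2) h1
    · rw [h2]; simp

theorem stmt_13 :
    ∃ C : ℝ, 0 < C ∧ ∀ n : ℕ, 1 ≤ n →
      (|newmanSum4 5 0 n| : ℝ) ≤
        C * (n : ℝ) ^ (Real.log (5 + 2 * Real.sqrt 5) / Real.log 16) := by
  refine ⟨32, by norm_num, fun n hn => ?_⟩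
  have hζ := Complex.isPrimitiveRoot_exp 5 (by norm_num)
  set ζ := Complex.exp (2 * Real.pi * Complex.I / (5 : ℕ))
  have h := newman_eq ζ hζ n
  have hn1 : ‖∑ k ∈ Finset.range 5, tw4 (ζ ^ k) n‖ ≤ ∑ k ∈ Finset.range 5,
      (32 * (n : ℝ) ^ (Real.log (5 + 2 * Real.sqrt 5) / Real.log 16) - 16) := by
    refine norm_sum_le_of_le _ fun k _ => tw4_bound _ ?_ n hn
    rw [← pow_mul, mul_comm, pow_mul, hζ.pow_eq_one, one_pow]
  rw [← h, norm_mul, Complex.norm_intCast, Finset.sum_const, Finset.card_range] at hn1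
  simp only [nsmul_eq_mul, Complex.norm_ofNat] at hn1
  push_cast at hn1 ⊢
  linarith
end
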